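/- Let (X,d) be a metric space with at least 3 points, let F,G : ℝ≥0 × ℝ≥0 × ℝ≥0 → ℝ≥0 satisfy the (F,G)-conditions and be continuous, and let T : X → X be an (F,G)-contracting mapping with constant α ∈ [0,1) such that there exists k > 0 with G(ξ,ξ,0) ≤ k·ξ for all ξ ∈ ℝ≥0 and α·k < 1. If every point of X is an accumulation point of X, then T is a contraction mapping: d(Tx,Ty) ≤ α·k·d(x,y) for all x,y ∈ X. -/

import Mathlib

open scoped NNReal

/-!
For distinct `x` and `y`, apply the three-point inequality to `x, y, z` and let `z → x` through
points other than `x` and `y`. Since `F` dominates its first argument, the left-hand side stays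
above `d(Tx, Ty)`, while by continuity of `G` the right-hand side tends to
`α * G(d(x, y), d(x, y), 0) ≤ α * k * d(x, y)`.
-/

open Filter Topology

section

variable {X Y : Type*} [PseudoMetricSpace X] [PseudoMetricSpace Y]

/-- `T` is an `(F, G)`-contracting mapping with constant `α`: on every triple of pairwise distinct
points, `F` of the side lengths of the image triangle is at most `α` times `G` of the original side
lengths. Only this inequality is recorded, and the codomain may differ from the domain. -/
def IsFGContracting (F G : ℝ≥0 × ℝ≥0 × ℝ≥0 → ℝ≥0) (α : ℝ≥0) (T : X → Y) : Prop :=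
  ∀ x y z : X, x ≠ y → y ≠ z → x ≠ z →
    F (nndist (T x) (T y), nndist (T y) (T z), nndist (T x) (T z)) ≤
      α * G (nndist x y, nndist y z, nndist x z)

theorem nhds_inf_cofinite_neBot_of_infinite_ball {x : X}
    (hx : ∀ ε : ℝ, 0 < ε → (Metric.ball x ε).Infinite) : (𝓝 x ⊓ cofinite).NeBot := by
  rw [neBot_iff, Ne, ← disjoint_iff, disjoint_cofinite_right]
  rintro ⟨U, hU, hU_finite⟩
  obtain ⟨ε, hε, hball⟩ := Metric.mem_nhds_iff.mp hU
  exact hx ε hε (hU_finite.subset hball)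

theorem tendsto_nndist_triple_nhds_left (x y : X) :
    Tendsto (fun z ↦ (nndist x y, nndist y z, nndist x z)) (𝓝 x)
      (𝓝 (nndist x y, nndist x y, 0)) := by
  have hcont : Continuous fun z ↦ (nndist x y, nndist y z, nndist x z) := by fun_prop
  simpa only [nndist_self, nndist_comm y x] using hcont.tendsto x

namespace IsFGContracting

variable {F G : ℝ≥0 × ℝ≥0 × ℝ≥0 → ℝ≥0} {α : ℝ≥0} {T : X → Y}

theorem nndist_map_le_mul_of_ne (hT : IsFGContracting F G α T)
    (hF : ∀ ξ η ζ : ℝ≥0, ξ ≤ F (ξ, η, ζ)) {x y : X} (hxy : x ≠ y)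
    (hG : ContinuousAt G (nndist x y, nndist x y, 0)) [(𝓝 x ⊓ cofinite).NeBot] :
    nndist (T x) (T y) ≤ α * G (nndist x y, nndist x y, 0) := by
  have hlim : Tendsto (fun z ↦ α * G (nndist x y, nndist y z, nndist x z)) (𝓝 x ⊓ cofinite)
      (𝓝 (α * G (nndist x y, nndist x y, 0))) :=
    ((hG.tendsto.comp (tendsto_nndist_triple_nhds_left x y)).const_mul α).mono_left inf_le_left
  have hne (w : X) : ∀ᶠ z in 𝓝 x ⊓ cofinite, z ≠ w :=
    (eventually_cofinite_ne w).filter_mono inf_le_right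
  refine ge_of_tendsto hlim ?_
  filter_upwards [hne x, hne y] with z hzx hzy
  exact (hF _ _ _).trans (hT x y z hxy hzy.symm hzx.symm)

end IsFGContracting

theorem stmt6_general {F G : ℝ≥0 × ℝ≥0 × ℝ≥0 → ℝ≥0} {α k : ℝ≥0} {T : X → Y}
    (hT : IsFGContracting F G α T) (hF : ∀ ξ η ζ : ℝ≥0, ξ ≤ F (ξ, η, ζ))
    (hGcont : ∀ ξ : ℝ≥0, ContinuousAt G (ξ, ξ, 0)) (hk : ∀ ξ : ℝ≥0, G (ξ, ξ, 0) ≤ k * ξ)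
    (hacc : ∀ x : X, ∀ ε : ℝ, 0 < ε → (Metric.ball x ε).Infinite) :
    LipschitzWith (α * k) T := by
  refine lipschitzWith_iff_dist_le_mul.mpr fun x y ↦ ?_
  rcases eq_or_ne x y with rfl | hxy
  · simp
  have := nhds_inf_cofinite_neBot_of_infinite_ball (hacc x)
  have hle : nndist (T x) (T y) ≤ α * k * nndist x y :=
    calc nndist (T x) (T y)
      _ ≤ α * G (nndist x y, nndist x y, 0) := hT.nndist_map_le_mul_of_ne hF hxy (hGcont _)
      _ ≤ α * (k * nndist x y) := by gcongr; exact hk _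
      _ = α * k * nndist x y := (mul_assoc _ _ _).symm
  exact_mod_cast hle

end

theorem stmt6 {X : Type*} [MetricSpace X]
    (hX : ∃ x y z : X, x ≠ y ∧ y ≠ z ∧ x ≠ z)
    (F G : ℝ≥0 × ℝ≥0 × ℝ≥0 → ℝ≥0)
    (hFperm : ∀ ξ η ζ : ℝ≥0, F (η, ξ, ζ) = F (ξ, η, ζ) ∧ F (ξ, ζ, η) = F (ξ, η, ζ))
    (hGperm : ∀ ξ η ζ : ℝ≥0, G (η, ξ, ζ) = G (ξ, η, ζ) ∧ G (ξ, ζ, η) = G (ξ, η, ζ))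
    (hG1 : ∀ ξ η ζ : ℝ≥0, ξ ≤ G (ξ, η, ζ))
    (hFG : ∀ ξ η ζ : ℝ≥0, G (ξ, η, ζ) ≤ F (ξ, η, ζ))
    (hG0 : G (0, 0, 0) = 0)
    (hGcont0 : ContinuousAt G (0, 0, 0))
    (hGmono : Monotone G)
    (T : X → X) (α : ℝ≥0) (hα : α < 1)
    (hT : ∀ x y z : X, x ≠ y → y ≠ z → x ≠ z →
      F (nndist (T x) (T y), nndist (T y) (T z), nndist (T x) (T z)) ≤
        α * G (nndist x y, nndist y z, nndist x z))
    (hFcont : Continuous F) (hGcont : Continuous G)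
    (k : ℝ≥0) (hk0 : 0 < k)
    (hk : ∀ ξ : ℝ≥0, G (ξ, ξ, 0) ≤ k * ξ)
    (hαk : α * k < 1)
    (hacc : ∀ x : X, ∀ ε : ℝ, 0 < ε → (Metric.ball x ε).Infinite)
    :
    ∀ x y : X, nndist (T x) (T y) ≤ α * k * nndist x y := by
  have hF (ξ η ζ : ℝ≥0) : ξ ≤ F (ξ, η, ζ) := (hG1 ξ η ζ).trans (hFG ξ η ζ)
  exact (stmt6_general hT hF (fun _ ↦ hGcont.continuousAt) hk hacc).nndist_le
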